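/- For every real α > −1, real ℓ ≥ 0, and natural number n, writing A_n(α), B_n(α) for the coefficients with parameter α, one has both A_n(α+1)² + B_{n−1}(α+1)² = A_n(α)² + B_n(α)² (with B_{−1} = 0 when n = 0) and A_n(α+1)·B_n(α+1) = B_n(α)·A_{n+1}(α). These are the entrywise forms of the operator identity C_{α+1,ℓ}ᵀ·C_{α+1,ℓ} = C_{α,ℓ}·C_{α,ℓ}ᵀ, both sides representing multiplication by (1−r²) followed by conversion back to the same basis. -/

import Mathlib

/-- `A_n(α)` coefficient of the conversion matrix `C_{α,ℓ}`. -/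
noncomputable def Acoef (α ℓ : ℝ) (n : ℤ) : ℝ :=
  Real.sqrt ((((n : ℝ) + α + 1) * ((n : ℝ) + α + ℓ + 3 / 2)) /
    ((2 * (n : ℝ) + α + ℓ + 3 / 2) * (2 * (n : ℝ) + α + ℓ + 5 / 2)))

/-- `B_n(α)` coefficient of the conversion matrix `C_{α,ℓ}`; note `B_{−1}(α) = 0`. -/
noncomputable def Bcoef (α ℓ : ℝ) (n : ℤ) : ℝ :=
  -Real.sqrt ((((n : ℝ) + 1) * ((n : ℝ) + ℓ + 3 / 2)) /
    ((2 * (n : ℝ) + α + ℓ + 5 / 2) * (2 * (n : ℝ) + α + ℓ + 7 / 2)))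

/-!
Since `Q_n^{α,ℓ}` is orthonormal for a weight proportional to `(1 - r²)^α`, the matrix
`C_{α,ℓ}ᵀ C_{α,ℓ}` is multiplication by `1 - r²` in the basis with parameter `α`, and
`C_{α,ℓ} C_{α,ℓ}ᵀ` is the same multiplication in the basis with parameter `α + 1`. Both sides of the
diagonal identity are therefore the Jacobi diagonal entry of `1 - r²` with parameter `α + 1`; each
evaluation is an instance of one partial fraction identity. Off the diagonal, the four coefficients
share two numerators and two denominators, and the identity interchanges the numerators.
-/

/-- The diagonal entry, in row `n`, of multiplication by `1 - r²` in the orthonormal basis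
`Q_n^{α,ℓ}`. With `x = 2r² - 1` and `β = ℓ + 1/2` it is one minus the classical diagonal
recurrence coefficient of the Jacobi polynomials `P_n^{(α,β)}(x)`, halved. -/
noncomputable def oneSubSqDiag (α ℓ : ℝ) (n : ℤ) : ℝ :=
  (1 + (α ^ 2 - (ℓ + 1 / 2) ^ 2) /
    ((2 * (n : ℝ) + α + ℓ + 1 / 2) * (2 * (n : ℝ) + α + ℓ + 5 / 2))) / 2

theorem jacobi_diag_partial_fractions (a b : ℝ) {t : ℝ} (hsub : t - 1 ≠ 0) (ht : t ≠ 0)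
    (hadd : t + 1 ≠ 0) :
    (((t + 1 + a) ^ 2 - b ^ 2) / 4) / (t * (t + 1)) +
      (((t - 1 - a) ^ 2 - b ^ 2) / 4) / ((t - 1) * t) =
        (1 + (a ^ 2 - b ^ 2) / ((t - 1) * (t + 1))) / 2 := by
  field_simp
  ring

theorem sqrt_div_mul_sqrt_div_comm (a b : ℝ) {c d : ℝ} (hc : 0 ≤ c) (hd : 0 ≤ d) :
    √(a / c) * √(b / d) = √(b / c) * √(a / d) := by
  simp only [Real.sqrt_div' _ hc, Real.sqrt_div' _ hd]
  ring

theorem add_div_two_mul_add_nonneg {n : ℤ} (hn : 0 ≤ n) {s : ℝ} (hs : -1 < s) :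
    0 ≤ ((n : ℝ) + s) / (2 * (n : ℝ) + s) := by
  rcases hn.eq_or_lt with rfl | hpos
  · rcases eq_or_ne s 0 with rfl | hs₀ <;> simp [*]
  · have hone : (1 : ℝ) ≤ n := mod_cast hpos
    exact div_nonneg (by linarith) (by linarith)

section Coefficients

variable {α ℓ : ℝ} {n : ℤ}

theorem acoef_sq (hα : -1 < α) (hℓ : -3 / 2 < ℓ) (hn : 0 ≤ n) :
    Acoef α ℓ n ^ 2 = (((n : ℝ) + α + 1) * ((n : ℝ) + α + ℓ + 3 / 2)) /
      ((2 * (n : ℝ) + α + ℓ + 3 / 2) * (2 * (n : ℝ) + α + ℓ + 5 / 2)) := by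
  have hn' : (0 : ℝ) ≤ n := mod_cast hn
  refine Real.sq_sqrt ?_
  rw [mul_comm, mul_div_mul_comm]
  refine mul_nonneg ?_ (div_nonneg (by linarith) (by linarith))
  simpa only [← add_assoc] using
    add_div_two_mul_add_nonneg hn (show -1 < α + ℓ + 3 / 2 by linarith)

theorem bcoef_sq (hα : -1 < α) (hℓ : -3 / 2 < ℓ) (hn : -1 ≤ n) :
    Bcoef α ℓ n ^ 2 = (((n : ℝ) + 1) * ((n : ℝ) + ℓ + 3 / 2)) /
      ((2 * (n : ℝ) + α + ℓ + 5 / 2) * (2 * (n : ℝ) + α + ℓ + 7 / 2)) := by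
  rw [Bcoef, neg_sq]
  refine Real.sq_sqrt ?_
  rcases hn.eq_or_lt with rfl | hlt
  · simp
  · have hn' : (0 : ℝ) ≤ n := mod_cast (show 0 ≤ n by lia)
    exact div_nonneg (mul_nonneg (by linarith) (by linarith))
      (mul_nonneg (by linarith) (by linarith))

theorem acoef_sq_add_bcoef_sub_one_sq (hα : -1 < α) (hℓ : -3 / 2 < ℓ) (hn : 0 ≤ n)
    (h₁ : 2 * (n : ℝ) + α + ℓ + 1 / 2 ≠ 0) (h₃ : 2 * (n : ℝ) + α + ℓ + 3 / 2 ≠ 0) :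
    Acoef α ℓ n ^ 2 + Bcoef α ℓ (n - 1) ^ 2 = oneSubSqDiag α ℓ n := by
  have hn' : (0 : ℝ) ≤ n := mod_cast hn
  have hsub : 2 * (n : ℝ) + α + ℓ + 3 / 2 - 1 ≠ 0 := by convert h₁ using 1; ring
  have hadd : 2 * (n : ℝ) + α + ℓ + 3 / 2 + 1 ≠ 0 := by linarith
  rw [acoef_sq hα hℓ hn, bcoef_sq hα hℓ (by lia), oneSubSqDiag, Int.cast_sub, Int.cast_one]
  convert jacobi_diag_partial_fractions α (ℓ + 1 / 2) hsub h₃ hadd using 3 <;> ring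

theorem acoef_sq_add_bcoef_sq (hα : -1 < α) (hℓ : -3 / 2 < ℓ) (hn : 0 ≤ n)
    (h₃ : 2 * (n : ℝ) + α + ℓ + 3 / 2 ≠ 0) :
    Acoef α ℓ n ^ 2 + Bcoef α ℓ n ^ 2 = oneSubSqDiag (α + 1) ℓ n := by
  have hn' : (0 : ℝ) ≤ n := mod_cast hn
  have hsub : 2 * (n : ℝ) + α + ℓ + 5 / 2 - 1 ≠ 0 := by convert h₃ using 1; ring
  have hmid : 2 * (n : ℝ) + α + ℓ + 5 / 2 ≠ 0 := by linarith
  have hadd : 2 * (n : ℝ) + α + ℓ + 5 / 2 + 1 ≠ 0 := by linarith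
  rw [acoef_sq hα hℓ hn, bcoef_sq hα hℓ (by lia), oneSubSqDiag, add_comm (_ / _)]
  -- The value of the sum depends only on `a²`, and `a = -(α + 1)` yields these two numerators.
  convert jacobi_diag_partial_fractions (-(α + 1)) (ℓ + 1 / 2) hsub hmid hadd using 3 <;> ring

theorem acoef_add_one_mul_bcoef_add_one (h : 0 < 2 * (n : ℝ) + α + ℓ + 5 / 2) :
    Acoef (α + 1) ℓ n * Bcoef (α + 1) ℓ n = Bcoef α ℓ n * Acoef α ℓ (n + 1) := by
  set a := ((n : ℝ) + α + 2) * ((n : ℝ) + α + ℓ + 5 / 2)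
  set b := ((n : ℝ) + 1) * ((n : ℝ) + ℓ + 3 / 2)
  set c := (2 * (n : ℝ) + α + ℓ + 5 / 2) * (2 * (n : ℝ) + α + ℓ + 7 / 2)
  set d := (2 * (n : ℝ) + α + ℓ + 7 / 2) * (2 * (n : ℝ) + α + ℓ + 9 / 2)
  have hc : 0 ≤ c := mul_nonneg (by linarith) (by linarith)
  have hd : 0 ≤ d := mul_nonneg (by linarith) (by linarith)
  have hA : Acoef (α + 1) ℓ n = √(a / c) := by
    rw [Acoef]
    congr 2 <;> ring
  have hB : Bcoef (α + 1) ℓ n = -√(b / d) := by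
    rw [Bcoef]
    congr 3; ring
  have hA' : Acoef α ℓ (n + 1) = √(a / d) := by
    rw [Acoef]
    push_cast
    congr 2 <;> ring
  have hB' : Bcoef α ℓ n = -√(b / c) := rfl
  rw [hA, hB, hA', hB', mul_neg, neg_mul, sqrt_div_mul_sqrt_div_comm a b hc hd]

/-- With `β = ℓ + 1/2`, the parameter range is that of the Jacobi weights, `α, β > -1`. At `n = 0`
and `α + β = -1` the fraction in `Acoef` is `0 / 0`, which Lean evaluates to `0`. -/
theorem conversion_conversion_transpose_identity_general (hα : -1 < α) (hℓ : -3 / 2 < ℓ)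
    (hn : 0 ≤ n) (hden : 2 * (n : ℝ) + α + ℓ + 3 / 2 ≠ 0) :
    Acoef (α + 1) ℓ n ^ 2 + Bcoef (α + 1) ℓ (n - 1) ^ 2
        = Acoef α ℓ n ^ 2 + Bcoef α ℓ n ^ 2 ∧
    Acoef (α + 1) ℓ n * Bcoef (α + 1) ℓ n = Bcoef α ℓ n * Acoef α ℓ (n + 1) := by
  have hn' : (0 : ℝ) ≤ n := mod_cast hn
  have hpos : 0 < 2 * (n : ℝ) + α + ℓ + 5 / 2 := by linarith
  refine ⟨?_, acoef_add_one_mul_bcoef_add_one hpos⟩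
  calc Acoef (α + 1) ℓ n ^ 2 + Bcoef (α + 1) ℓ (n - 1) ^ 2
      = oneSubSqDiag (α + 1) ℓ n :=
        acoef_sq_add_bcoef_sub_one_sq (by linarith) hℓ hn
          (by convert hden using 1; ring) (by linarith)
    _ = Acoef α ℓ n ^ 2 + Bcoef α ℓ n ^ 2 := (acoef_sq_add_bcoef_sq hα hℓ hn hden).symm

end Coefficients

/-- Entrywise form of the operator identity `C_{α+1,ℓ}ᵀ·C_{α+1,ℓ} = C_{α,ℓ}·C_{α,ℓ}ᵀ`
(both sides representing multiplication by `1−r²` followed by conversion back to the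
same basis): for `α > −1`, `ℓ ≥ 0`, and every `n : ℕ`, one has
`A_n(α+1)² + B_{n−1}(α+1)² = A_n(α)² + B_n(α)²` (with `B_{−1} = 0` when `n = 0`) and
`A_n(α+1)·B_n(α+1) = B_n(α)·A_{n+1}(α)`. -/
theorem conversion_conversion_transpose_identity (α ℓ : ℝ) (hα : -1 < α) (hℓ : 0 ≤ ℓ)
    (n : ℕ) :
    Acoef (α + 1) ℓ n ^ 2 + Bcoef (α + 1) ℓ ((n : ℤ) - 1) ^ 2
        = Acoef α ℓ n ^ 2 + Bcoef α ℓ n ^ 2 ∧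
    Acoef (α + 1) ℓ n * Bcoef (α + 1) ℓ n = Bcoef α ℓ n * Acoef α ℓ ((n : ℤ) + 1) := by
  have hn : (0 : ℝ) ≤ (n : ℤ) := mod_cast n.zero_le
  exact conversion_conversion_transpose_identity_general hα (by linarith)
    n.cast_nonneg (by linarith)
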